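/- (Recurrence relation for 2D q-Genocchi polynomials.) For every n ≥ 1 the following identity of polynomials in x, y holds: [n]_q · G_{n,q}(qx,y) = q^{n−1} G_{n,q}(x,y) + [n]_q q^{n} x · G_{n−1,q}(x,y) + Σ_{k=1}^{n} [n choose k]_q q^{n−k} (α_k^G + [k]_q β_{k−1}^G y) G_{n−k,q}(x,y), where G_{n,q}(qx,y) denotes the polynomial obtained from G_{n,q}(x,y) by substituting qx for x. -/

import Mathlib

noncomputable section

open Finset MvPolynomial

/-- The `q`-integer `[n]_q = 1 + q + ⋯ + q^(n-1)`. -/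
def qInt {K : Type*} [Field K] (q : K) (n : ℕ) : K := ∑ i ∈ Finset.range n, q ^ i

/-- The `q`-factorial `[n]_q! = [1]_q [2]_q ⋯ [n]_q`. -/
def qFact {K : Type*} [Field K] (q : K) (n : ℕ) : K := ∏ k ∈ Finset.range n, qInt q (k + 1)

/-- The `q`-binomial coefficient `[n choose k]_q`. -/
def qChoose {K : Type*} [Field K] (q : K) (n k : ℕ) : K :=
  qFact q n / (qFact q k * qFact q (n - k))

/-- The partial `q`-derivative in the variable `v` (v = 0 is `x`, v = 1 is `y`),
the linear operator determined by `D_{q,x}(x^m y^l) = [m]_q x^(m-1) y^l` and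
`D_{q,y}(x^m y^l) = [l]_q x^m y^(l-1)`. -/
def qDeriv {K : Type*} [Field K] (q : K) (v : Fin 2) (P : MvPolynomial (Fin 2) K) :
    MvPolynomial (Fin 2) K :=
  ∑ m ∈ P.support, monomial (m - Finsupp.single v 1) (P.coeff m * qInt q (m v))

/-- Substitution `x ↦ c·x` in a polynomial in the two variables `x = X 0`, `y = X 1`. -/
def substX {K : Type*} [Field K] (c : K) (P : MvPolynomial (Fin 2) K) :
    MvPolynomial (Fin 2) K :=
  aeval (fun i : Fin 2 => if i = 0 then C c * X 0 else X 1) P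

/-- Substitution `y ↦ c·y` in a polynomial in the two variables `x = X 0`, `y = X 1`. -/
def substY {K : Type*} [Field K] (c : K) (P : MvPolynomial (Fin 2) K) :
    MvPolynomial (Fin 2) K :=
  aeval (fun i : Fin 2 => if i = 0 then X 0 else C c * X 1) P

/-- The 2D `q`-Appell polynomials attached to a coefficient sequence `a`:
`A_{n,q}(x,y) = Σ_{i+j+k=n} ([n]_q!/([i]_q![j]_q![k]_q!)) a_i q^(k(k-1)/2) x^j y^k`. -/
def appell {K : Type*} [Field K] (q : K) (a : ℕ → K) (n : ℕ) : MvPolynomial (Fin 2) K :=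
  ∑ i ∈ Finset.range (n + 1), ∑ j ∈ Finset.range (n + 1 - i),
    monomial (Finsupp.single (0 : Fin 2) j + Finsupp.single (1 : Fin 2) (n - i - j))
      (qFact q n / (qFact q i * qFact q j * qFact q (n - i - j)) * a i *
        q ^ ((n - i - j) * (n - i - j - 1) / 2))

/-! Let `A`, `e`, `E` be the `q`-exponential generating functions, in a formal variable `t`, of
`a n`, `x ^ n` and `q ^ (n choose 2) * y ^ n`. That of the Appell polynomials is
`A(t) e(xt) E(yt)`, and multiplying the `n`-th coefficient by `[n]_q` is the `q`-Euler operator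
`θ = t D_q`. It satisfies `θ(f g)(t) = θ f(t) g(t) + f(qt) θ g(t)`, while `θ(e(xt)) = xt e(xt)` and
`θ(E(yt)) = yt E(qyt)`. Hence power series `α`, `β` with `θ A(t) = α(t) A(qt)` and
`A(t) = β(t) A(qt)` give
`θ(A(t) e(qxt) E(yt)) = (α(t) + yt β(t) + qxt) A(qt) e(qxt) E(qyt)`,
which is a recurrence for the Appell polynomials on comparing coefficients. For the Genocchi
numbers `A(t) (1 + e(t)) = 2t`, from which
`α = (1 - A(t) e(t) / 2) / q` and `β = (1 + (q - 1) A(t) e(t) / 2) / q`. -/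

open scoped PowerSeries

section QNumbers

variable {K : Type*} [Field K] (q : K)

theorem qInt_zero : qInt q 0 = 0 := by simp [qInt]

theorem qInt_one : qInt q 1 = 1 := by simp [qInt]

theorem qInt_add (m n : ℕ) : qInt q (m + n) = qInt q m + q ^ m * qInt q n := by
  simp only [qInt, sum_range_add, pow_add, mul_sum]

theorem sub_one_mul_qInt (n : ℕ) : (q - 1) * qInt q n = q ^ n - 1 :=
  mul_geom_sum q n

theorem qFact_zero : qFact q 0 = 1 := by simp [qFact]

theorem qFact_succ (n : ℕ) : qFact q (n + 1) = qFact q n * qInt q (n + 1) :=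
  prod_range_succ _ n

variable {q}

theorem qFact_ne_zero (hq : ∀ n : ℕ, 1 ≤ n → qInt q n ≠ 0) (n : ℕ) : qFact q n ≠ 0 :=
  prod_ne_zero_iff.mpr fun k _ => hq (k + 1) k.succ_pos

theorem qChoose_zero_right (hq : ∀ n : ℕ, 1 ≤ n → qInt q n ≠ 0) (n : ℕ) : qChoose q n 0 = 1 := by
  simp [qChoose, qFact_zero, qFact_ne_zero hq]

theorem qChoose_self (hq : ∀ n : ℕ, 1 ≤ n → qInt q n ≠ 0) (n : ℕ) : qChoose q n n = 1 := by
  simp [qChoose, qFact_zero, qFact_ne_zero hq]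

end QNumbers

section QEuler

variable {K R S : Type*} [Field K] [CommRing R] [Algebra K R] [CommRing S] [Algebra K S] (q : K)

/-- The `q`-Euler operator `t D_q` on power series in `t`, multiplying the `n`-th coefficient by
`[n]_q`. Unlike the quotient `(f(qt) - f(t)) / (q - 1)`, this also makes sense for `q = 1`. -/
def qEuler : R⟦X⟧ →ₗ[R] R⟦X⟧ where
  toFun f := PowerSeries.mk fun n => qInt q n • PowerSeries.coeff n f
  map_add' f g := by ext n; simp
  map_smul' c f := by ext n; simp

@[simp]
theorem coeff_qEuler (n : ℕ) (f : R⟦X⟧) :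
    PowerSeries.coeff n (qEuler q f) = qInt q n • PowerSeries.coeff n f := by
  simp [qEuler]

theorem map_qEuler (φ : R →ₐ[K] S) (f : R⟦X⟧) :
    PowerSeries.map (φ : R →+* S) (qEuler q f) = qEuler q (PowerSeries.map (φ : R →+* S) f) := by
  ext n
  simp

theorem qEuler_mul (f g : R⟦X⟧) :
    qEuler q (f * g) =
      qEuler q f * g + PowerSeries.rescale (algebraMap K R q) f * qEuler q g := by
  ext n
  simp only [coeff_qEuler, map_add, PowerSeries.coeff_mul, PowerSeries.coeff_rescale, smul_sum,
    ← sum_add_distrib]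
  refine sum_congr rfl fun ij hij => ?_
  rw [← mem_antidiagonal.mp hij, qInt_add]
  simp only [Algebra.smul_def, map_add, map_mul, map_pow]
  ring

theorem qEuler_one : qEuler q (1 : R⟦X⟧) = 0 := by
  ext n
  obtain rfl | hn := eq_or_ne n 0
  · simp [qInt_zero]
  · simp [PowerSeries.coeff_one, hn]

theorem qEuler_C_mul_X (c : R) :
    qEuler q (PowerSeries.C c * PowerSeries.X) = PowerSeries.C c * PowerSeries.X := by
  ext n
  obtain rfl | hn := eq_or_ne n 1
  · simp [qInt_one]
  · simp [PowerSeries.coeff_X, hn]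

theorem rescale_eq_add_qEuler (f : R⟦X⟧) :
    PowerSeries.rescale (algebraMap K R q) f =
      f + PowerSeries.C (algebraMap K R (q - 1)) * qEuler q f := by
  ext n
  have hqn : algebraMap K R q ^ n =
      1 + algebraMap K R (q - 1) * algebraMap K R (qInt q n) := by
    rw [← map_mul, sub_one_mul_qInt, map_sub, map_pow, map_one, add_sub_cancel]
  simp only [PowerSeries.coeff_rescale, map_add, PowerSeries.coeff_C_mul, coeff_qEuler,
    Algebra.smul_def, hqn]
  ring

end QEuler

section QEgf

variable {K R S : Type*} [Field K] [CommRing R] [Algebra K R] [CommRing S] [Algebra K S] {q : K}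

/-- The `q`-exponential generating function `∑ a_n tⁿ / [n]_q!` of a sequence `a`. -/
def qEgf (q : K) (a : ℕ → R) : R⟦X⟧ := PowerSeries.mk fun n => (qFact q n)⁻¹ • a n

@[simp]
theorem coeff_qEgf (a : ℕ → R) (n : ℕ) :
    PowerSeries.coeff n (qEgf q a) = (qFact q n)⁻¹ • a n :=
  PowerSeries.coeff_mk _ _

@[simp]
theorem constantCoeff_qEgf (a : ℕ → R) : PowerSeries.constantCoeff (qEgf q a) = a 0 := by
  simp [← PowerSeries.coeff_zero_eq_constantCoeff_apply, qFact_zero]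

theorem qEgf_add (a b : ℕ → R) : qEgf q (fun n => a n + b n) = qEgf q a + qEgf q b := by
  ext n
  simp

theorem C_mul_qEgf (c : R) (a : ℕ → R) :
    PowerSeries.C c * qEgf q a = qEgf q fun n => c * a n := by
  ext n
  simp

theorem map_qEgf (φ : R →ₐ[K] S) (a : ℕ → R) :
    PowerSeries.map (φ : R →+* S) (qEgf q a) = qEgf q fun n => φ (a n) := by
  ext n
  simp

theorem rescale_qEgf (c : R) (a : ℕ → R) :
    PowerSeries.rescale c (qEgf q a) = qEgf q fun n => c ^ n * a n := by
  ext n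
  simp

theorem qEuler_qEgf (a : ℕ → R) : qEuler q (qEgf q a) = qEgf q fun n => qInt q n • a n := by
  ext n
  rw [coeff_qEuler, coeff_qEgf, coeff_qEgf, smul_comm]

variable (hq : ∀ n : ℕ, 1 ≤ n → qInt q n ≠ 0)
include hq

theorem qEgf_injective : Function.Injective (qEgf q : (ℕ → R) → R⟦X⟧) := by
  intro a b hab
  funext n
  simpa [qFact_ne_zero hq n] using congrArg (fun f => qFact q n • PowerSeries.coeff n f) hab

theorem qEgf_mul (a b : ℕ → R) :
    qEgf q a * qEgf q b =
      qEgf q fun n => ∑ k ∈ range (n + 1), qChoose q n k • (a k * b (n - k)) := by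
  ext n
  rw [PowerSeries.coeff_mul, Finset.Nat.sum_antidiagonal_eq_sum_range_succ_mk, coeff_qEgf,
    smul_sum]
  refine sum_congr rfl fun k _ => ?_
  have hchoose : (qFact q n)⁻¹ * qChoose q n k = (qFact q k)⁻¹ * (qFact q (n - k))⁻¹ := by
    have := qFact_ne_zero hq n
    rw [qChoose]
    field_simp
  rw [coeff_qEgf, coeff_qEgf, smul_mul_smul_comm, smul_smul, hchoose]

theorem X_mul_qEgf (a : ℕ → R) :
    PowerSeries.X * qEgf q a = qEgf q fun n => qInt q n • a (n - 1) := by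
  ext n
  cases n with
  | zero => simp [qInt_zero]
  | succ n =>
    have hfact : (qFact q (n + 1))⁻¹ * qInt q (n + 1) = (qFact q n)⁻¹ := by
      have := hq (n + 1) n.succ_pos
      rw [qFact_succ]
      field_simp
    rw [PowerSeries.coeff_succ_X_mul, coeff_qEgf, coeff_qEgf, smul_smul, hfact,
      Nat.add_sub_cancel]

end QEgf

section QExp

variable {K R S : Type*} [Field K] [CommRing R] [Algebra K R] [CommRing S] [Algebra K S] {q : K}

/-- The small `q`-exponential `e_q(xt) = ∑ xⁿ tⁿ / [n]_q!`, as a power series in `t`. -/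
def qExp (q : K) (x : R) : R⟦X⟧ := qEgf q fun n => x ^ n

/-- The big `q`-exponential `E_q(yt) = ∑ q^(n(n-1)/2) yⁿ tⁿ / [n]_q!`, as a power series in `t`. -/
def qExpBig (q : K) (y : R) : R⟦X⟧ := qEgf q fun n => q ^ (n * (n - 1) / 2) • y ^ n

theorem constantCoeff_qExp (x : R) : PowerSeries.constantCoeff (qExp q x) = 1 := by
  simp [qExp]

theorem one_add_qExp_ne_zero (h2 : (2 : R) ≠ 0) (x : R) : 1 + qExp q x ≠ 0 := by
  intro h
  have h0 := congrArg PowerSeries.constantCoeff h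
  rw [map_add, map_one, constantCoeff_qExp, map_zero, one_add_one_eq_two] at h0
  exact h2 h0

theorem map_qExp (φ : R →ₐ[K] S) (x : R) :
    PowerSeries.map (φ : R →+* S) (qExp q x) = qExp q (φ x) := by
  simp only [qExp, map_qEgf, map_pow]

theorem map_qExpBig (φ : R →ₐ[K] S) (y : R) :
    PowerSeries.map (φ : R →+* S) (qExpBig q y) = qExpBig q (φ y) := by
  simp only [qExpBig, map_qEgf, map_smul, map_pow]

theorem rescale_qExp (c x : R) : PowerSeries.rescale c (qExp q x) = qExp q (c * x) := by
  simp only [qExp, rescale_qEgf, mul_pow]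

variable (hq : ∀ n : ℕ, 1 ≤ n → qInt q n ≠ 0)
include hq

theorem qEuler_qExp (x : R) :
    qEuler q (qExp q x) = PowerSeries.C x * PowerSeries.X * qExp q x := by
  rw [qExp, qEuler_qEgf, mul_assoc, X_mul_qEgf hq, C_mul_qEgf]
  congr 1
  funext n
  cases n with
  | zero => simp [qInt_zero]
  | succ n => rw [Nat.add_sub_cancel, mul_smul_comm, pow_succ']

theorem qEuler_qExpBig (y : R) :
    qEuler q (qExpBig q y) =
      PowerSeries.C y * PowerSeries.X *
        PowerSeries.rescale (algebraMap K R q) (qExpBig q y) := by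
  rw [qExpBig, qEuler_qEgf, rescale_qEgf, mul_assoc, X_mul_qEgf hq, C_mul_qEgf]
  congr 1
  funext n
  cases n with
  | zero => simp [qInt_zero]
  | succ n =>
    have htriangle : (n + 1) * (n + 1 - 1) / 2 = n + n * (n - 1) / 2 := by
      rw [← Nat.choose_two_right, ← Nat.choose_two_right, Nat.choose_succ_succ,
        Nat.choose_one_right]
    rw [htriangle, Nat.add_sub_cancel]
    simp only [Algebra.smul_def, map_mul, map_pow, pow_add, pow_one]
    ring

theorem qEuler_mul_qExpBig_mul_rescale_qExp {A α β : R⟦X⟧}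
    (hα : qEuler q A = α * PowerSeries.rescale (algebraMap K R q) A)
    (hβ : A = β * PowerSeries.rescale (algebraMap K R q) A) (x y : R) :
    qEuler q (A * qExpBig q y * PowerSeries.rescale (algebraMap K R q) (qExp q x)) =
      (α + PowerSeries.C y * (PowerSeries.X * β) +
          PowerSeries.C (algebraMap K R q * x) * PowerSeries.X) *
        PowerSeries.rescale (algebraMap K R q) (A * qExpBig q y * qExp q x) := by
  have hAE : qEuler q (A * qExpBig q y) =
      (α + PowerSeries.C y * (PowerSeries.X * β)) *
        PowerSeries.rescale (algebraMap K R q) (A * qExpBig q y) := by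
    -- The product rule with its factors swapped, so that `E(yt)` is the one evaluated at `qt`.
    rw [mul_comm A, qEuler_mul, hα, qEuler_qExpBig hq, map_mul]
    linear_combination PowerSeries.C y * PowerSeries.X *
      PowerSeries.rescale (algebraMap K R q) (qExpBig q y) * hβ
  rw [qEuler_mul, hAE, map_mul _ (A * qExpBig q y), rescale_qExp, qEuler_qExp hq]
  ring

end QExp

section Appell

variable {K : Type*} [Field K] {q : K} (hq : ∀ n : ℕ, 1 ≤ n → qInt q n ≠ 0)
include hq

theorem qEgf_appell (a : ℕ → K) :
    qEgf q (appell q a) =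
      qEgf q (fun n => C (a n)) * qExpBig q (X 1) * qExp q (X 0) := by
  rw [mul_assoc, mul_comm (qExpBig q _), qExp, qExpBig, qEgf_mul hq, qEgf_mul hq]
  congr 1
  funext n
  refine sum_congr rfl fun i hi => ?_
  rw [mul_sum, smul_sum, Nat.sub_add_comm (mem_range_succ_iff.mp hi)]
  refine sum_congr rfl fun j _ => ?_
  have hcoeff : qFact q n / (qFact q i * qFact q j * qFact q (n - i - j)) =
      qChoose q n i * qChoose q (n - i) j := by
    have := qFact_ne_zero hq (n - i)
    rw [qChoose, qChoose]
    field_simp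
  rw [hcoeff, monomial_single_add, ← C_mul_X_pow_eq_monomial]
  simp only [smul_eq_C_mul, C_mul]
  ring

theorem qEgf_substX_appell (a : ℕ → K) :
    qEgf q (fun n => substX q (appell q a n)) =
      qEgf q (fun n => C (a n)) * qExpBig q (X 1) *
        PowerSeries.rescale (algebraMap K (MvPolynomial (Fin 2) K) q) (qExp q (X 0)) := by
  simp only [substX]
  rw [← map_qEgf, qEgf_appell hq, map_mul, map_mul, map_qEgf, map_qExp, map_qExpBig,
    rescale_qExp]
  simp [algebraMap_eq]

theorem qEuler_qEgf_substX_appell {a α β : ℕ → K}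
    (hα : qEuler q (qEgf q a) = qEgf q α * PowerSeries.rescale q (qEgf q a))
    (hβ : qEgf q a = qEgf q β * PowerSeries.rescale q (qEgf q a)) :
    qEuler q (qEgf q fun n => substX q (appell q a n)) =
      (qEgf q (fun n => C (α n)) +
          PowerSeries.C (X 1) * (PowerSeries.X * qEgf q fun n => C (β n)) +
          PowerSeries.C (C q * X 0) * PowerSeries.X) *
        PowerSeries.rescale (C q) (qEgf q (appell q a)) := by
  let ι := Algebra.ofId K (MvPolynomial (Fin 2) K)
  have hαC := congrArg (PowerSeries.map (ι : K →+* MvPolynomial (Fin 2) K)) hα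
  have hβC := congrArg (PowerSeries.map (ι : K →+* MvPolynomial (Fin 2) K)) hβ
  rw [map_qEuler, map_mul, ← PowerSeries.rescale_map, map_qEgf, map_qEgf] at hαC
  rw [map_mul, ← PowerSeries.rescale_map, map_qEgf, map_qEgf] at hβC
  rw [qEgf_substX_appell hq, qEgf_appell hq]
  exact qEuler_mul_qExpBig_mul_rescale_qExp hq hαC hβC (X 0) (X 1)

theorem appell_recurrence {a α β : ℕ → K}
    (hα : qEuler q (qEgf q a) = qEgf q α * PowerSeries.rescale q (qEgf q a))
    (hβ : qEgf q a = qEgf q β * PowerSeries.rescale q (qEgf q a)) (n : ℕ) :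
    C (qInt q n) * substX q (appell q a n) =
      (∑ k ∈ range (n + 1), C (qChoose q n k * q ^ (n - k)) *
        (C (α k) + C (qInt q k * β (k - 1)) * X 1) * appell q a (n - k)) +
      C (qInt q n * q ^ n) * X 0 * appell q a (n - 1) := by
  have hgf := qEuler_qEgf_substX_appell hq hα hβ
  rw [qEuler_qEgf, rescale_qEgf, X_mul_qEgf hq, C_mul_qEgf, ← qEgf_add, add_mul, qEgf_mul hq,
    mul_assoc, X_mul_qEgf hq, C_mul_qEgf, ← qEgf_add] at hgf
  have hcoeff := congrFun (qEgf_injective hq hgf) n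
  simp only [smul_eq_C_mul] at hcoeff
  rw [hcoeff]
  refine congrArg₂ (· + ·) (sum_congr rfl fun k _ => ?_) ?_
  · simp only [C_mul, C_pow]
    ring
  · cases n with
    | zero => simp [qInt_zero]
    | succ n =>
      simp only [C_mul, C_pow, Nat.add_sub_cancel]
      ring

end Appell

section Genocchi

variable {K : Type*} [Field K] {q : K} (hq : ∀ n : ℕ, 1 ≤ n → qInt q n ≠ 0)
  {G : ℕ → K} (hG0 : G 0 = 0)
include hq hG0

theorem qEgf_mul_one_add_qExp (hG1 : G 1 = 1)
    (hG : ∀ n : ℕ, 2 ≤ n → G n + ∑ k ∈ range (n + 1), qChoose q n k * G k = 0) :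
    qEgf q G * (1 + qExp q 1) = PowerSeries.C 2 * PowerSeries.X := by
  rw [mul_add, mul_one, qExp, qEgf_mul hq, ← qEgf_add]
  ext n
  simp only [one_pow, mul_one, smul_eq_mul, coeff_qEgf]
  match n with
  | 0 => simp [hG0]
  | 1 =>
    norm_num [sum_range_succ, hG0, hG1, qChoose_self hq, qFact_succ, qFact_zero, qInt_one]
  | n + 2 => simp [hG (n + 2) (by omega)]

theorem qEgf_eq_C_add_C_mul {b : ℕ → K} {c d : K} (hb0 : b 0 = c)
    (hb : ∀ k : ℕ, 1 ≤ k → b k = d * ∑ j ∈ range (k + 1), qChoose q k j * G j) :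
    qEgf q b = PowerSeries.C c + PowerSeries.C d * (qEgf q G * qExp q 1) := by
  rw [qExp, qEgf_mul hq, C_mul_qEgf]
  ext n
  cases n with
  | zero => simp [hb0, hG0, qFact_zero]
  | succ n => simp [hb (n + 1) n.succ_pos]

end Genocchi

section GenocchiEquation

variable {K : Type*} [Field K] {q : K} (hq : ∀ n : ℕ, 1 ≤ n → qInt q n ≠ 0) {A : K⟦X⟧}
  (hA : A * (1 + qExp q 1) = PowerSeries.C 2 * PowerSeries.X)
include hq hA

theorem rescale_mul_one_add_qExp_add :
    PowerSeries.rescale q A *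
        (1 + qExp q 1 + PowerSeries.C (q - 1) * (PowerSeries.X * qExp q 1)) =
      PowerSeries.C q * (PowerSeries.C 2 * PowerSeries.X) := by
  have hrescale := rescale_eq_add_qEuler q (A * (1 + qExp q 1))
  have hE := rescale_eq_add_qEuler q (qExp q (1 : K))
  rw [qEuler_qExp hq, map_one, one_mul] at hE
  rw [hA, qEuler_C_mul_X, ← hA, map_mul, map_add, map_one, hE, hA] at hrescale
  simp only [Algebra.algebraMap_self_apply, map_sub, map_one] at hrescale ⊢
  linear_combination hrescale

theorem qEuler_mul_one_add_qExp :
    qEuler q A * (1 + qExp q 1) + PowerSeries.rescale q A * (PowerSeries.X * qExp q 1) =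
      PowerSeries.C 2 * PowerSeries.X := by
  have hEuler := qEuler_mul q A (1 + qExp q 1)
  rw [hA, qEuler_C_mul_X, map_add, qEuler_one, zero_add, qEuler_qExp hq, map_one, one_mul] at hEuler
  exact hEuler.symm

variable (hq0 : q ≠ 0) (h2 : (2 : K) ≠ 0)
include hq0 h2

theorem eq_mul_rescale_of_mul_one_add_qExp :
    A = (PowerSeries.C (1 / q) + PowerSeries.C ((q - 1) / (2 * q)) * (A * qExp q 1)) *
      PowerSeries.rescale q A := by
  have hC2 : PowerSeries.C ((q - 1) / (2 * q)) * PowerSeries.C 2 =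
      PowerSeries.C (1 / q) * PowerSeries.C (q - 1) := by
    rw [← map_mul, ← map_mul]
    congr 1
    field_simp
  have hCq : PowerSeries.C (1 / q) * PowerSeries.C q = 1 := by
    rw [← map_mul, one_div_mul_cancel hq0, map_one]
  refine mul_right_cancel₀ (one_add_qExp_ne_zero (q := q) h2 1) ?_
  linear_combination (1 - PowerSeries.C ((q - 1) / (2 * q)) * qExp q 1 *
      PowerSeries.rescale q A) * hA - PowerSeries.C (1 / q) * rescale_mul_one_add_qExp_add hq hA -
    PowerSeries.C 2 * PowerSeries.X * hCq -
    PowerSeries.X * qExp q 1 * PowerSeries.rescale q A * hC2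

theorem qEuler_eq_mul_rescale_of_mul_one_add_qExp :
    qEuler q A = (PowerSeries.C (1 / q) + PowerSeries.C (-(1 / (2 * q))) * (A * qExp q 1)) *
      PowerSeries.rescale q A := by
  have hC2 : PowerSeries.C (-(1 / (2 * q))) * PowerSeries.C 2 = -PowerSeries.C (1 / q) := by
    rw [← map_mul, ← map_neg]
    congr 1
    field_simp
  have hCq : PowerSeries.C (1 / q) * PowerSeries.C q = 1 := by
    rw [← map_mul, one_div_mul_cancel hq0, map_one]
  refine mul_right_cancel₀ (one_add_qExp_ne_zero (q := q) h2 1) ?_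
  have hr := rescale_mul_one_add_qExp_add hq hA
  rw [map_sub, map_one] at hr
  linear_combination qEuler_mul_one_add_qExp hq hA -
    PowerSeries.C (-(1 / (2 * q))) * qExp q 1 * PowerSeries.rescale q A * hA -
    PowerSeries.C (1 / q) * hr +
    (PowerSeries.X * qExp q 1 * PowerSeries.rescale q A - PowerSeries.C 2 * PowerSeries.X) * hCq -
    PowerSeries.X * qExp q 1 * PowerSeries.rescale q A * hC2

end GenocchiEquation

theorem qGenocchi2D_recurrence_general
    {K : Type*} [Field K] (h2 : (2 : K) ≠ 0) (q : K) (hq0 : q ≠ 0)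
    (hq : ∀ n : ℕ, 1 ≤ n → qInt q n ≠ 0)
    (G : ℕ → K) (hG0 : G 0 = 0) (hG1 : G 1 = 1)
    (hG : ∀ n : ℕ, 2 ≤ n → G n + ∑ k ∈ range (n + 1), qChoose q n k * G k = 0)
    (αG βG : ℕ → K)
    (hαG : ∀ k : ℕ, 1 ≤ k →
      αG k = -(1 / (2 * q)) * ∑ j ∈ range (k + 1), qChoose q k j * G j)
    (hβG0 : βG 0 = 1 / q)
    (hβG : ∀ m : ℕ, 1 ≤ m →
      βG m = ((q - 1) / (2 * q)) * ∑ j ∈ range (m + 1), qChoose q m j * G j)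
    (n : ℕ) (hn : 1 ≤ n) :
    C (qInt q n) * substX q (appell q G n) =
      C (q ^ (n - 1)) * appell q G n +
      (∑ k ∈ Icc 1 n, C (qChoose q n k * q ^ (n - k)) *
        (C (αG k) + C (qInt q k * βG (k - 1)) * X 1) * appell q G (n - k)) +
      C (qInt q n * q ^ n) * X 0 * appell q G (n - 1) := by
  let α := Function.update αG 0 (1 / q)
  have hα_pos : ∀ k, 1 ≤ k → α k = αG k := fun k hk =>
    Function.update_of_ne (Nat.one_le_iff_ne_zero.mp hk) _ _
  have hA := qEgf_mul_one_add_qExp hq hG0 hG1 hG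
  have hα : qEuler q (qEgf q G) = qEgf q α * PowerSeries.rescale q (qEgf q G) := by
    rw [qEgf_eq_C_add_C_mul hq hG0 (Function.update_self ..)
      fun k hk => (hα_pos k hk).trans (hαG k hk)]
    exact qEuler_eq_mul_rescale_of_mul_one_add_qExp hq hA hq0 h2
  have hβ : qEgf q G = qEgf q βG * PowerSeries.rescale q (qEgf q G) := by
    rw [qEgf_eq_C_add_C_mul hq hG0 hβG0 hβG]
    exact eq_mul_rescale_of_mul_one_add_qExp hq hA hq0 h2
  have hterm_zero : qChoose q n 0 * q ^ n * α 0 = q ^ (n - 1) := by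
    rw [qChoose_zero_right hq, one_mul, ← Nat.sub_add_cancel hn, pow_succ, Nat.add_sub_cancel]
    simp [α, hq0]
  rw [appell_recurrence hq hα hβ n, sum_range_eq_add_Ico _ n.succ_pos, ← hterm_zero]
  congr 2
  · simp [qInt_zero]
  · exact sum_congr (Ico_add_one_right_eq_Icc 1 n) fun k hk => by
      rw [hα_pos k (mem_Icc.mp hk).1]

/-- Recurrence relation for 2D `q`-Genocchi polynomials. -/
theorem qGenocchi2D_recurrence
    {K : Type*} [Field K] [CharZero K] (q : K) (hq0 : q ≠ 0) (hq1 : q ≠ 1)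
    (hq : ∀ n : ℕ, 1 ≤ n → qInt q n ≠ 0)
    (G : ℕ → K) (hG0 : G 0 = 0) (hG1 : G 1 = 1)
    (hG : ∀ n : ℕ, 2 ≤ n → G n + ∑ k ∈ Finset.range (n + 1), qChoose q n k * G k = 0)
    (αG βG : ℕ → K)
    (hαG : ∀ k : ℕ, 1 ≤ k →
      αG k = -(1 / (2 * q)) * ∑ j ∈ Finset.range (k + 1), qChoose q k j * G j)
    (hβG0 : βG 0 = 1 / q)
    (hβG : ∀ m : ℕ, 1 ≤ m →
      βG m = ((q - 1) / (2 * q)) * ∑ j ∈ Finset.range (m + 1), qChoose q m j * G j)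
    (n : ℕ) (hn : 1 ≤ n) :
    C (qInt q n) * substX q (appell q G n) =
      C (q ^ (n - 1)) * appell q G n +
      (∑ k ∈ Finset.Icc 1 n, C (qChoose q n k * q ^ (n - k)) *
        (C (αG k) + C (qInt q k * βG (k - 1)) * X 1) * appell q G (n - k)) +
      C (qInt q n * q ^ n) * X 0 * appell q G (n - 1) := by
  exact qGenocchi2D_recurrence_general two_ne_zero q hq0 hq G hG0 hG1 hG αG βG hαG hβG0 hβG n hn
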